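/- arXiv:1607.01166 — 4 statements merged into one kernel-verified Lean document; each statement's English description precedes it below -/
import Mathlib

section
/- Let m ≥ 1 be an integer, H₀ ∈ (1 − 1/(2m), 1), H = 1 + m(H₀ − 1) ∈ (1/2, 1), and let L : (0,∞) → (0,∞) be slowly varying at +∞ and bounded away from 0 and +∞ on every compact subset of (0,∞). Let R : (0,∞) → [−1, 1] be measurable with R(x) / (x^{2H₀ − 2} L(x)²) → 1 as x → +∞. Then ( ∫_0^T ∫_0^T R(|s − t|)^m ds dt ) / ( T^{2H} L(T)^{2m} ) → 1 / (H(2H − 1)) as T → +∞. Equivalently, the variance of (1/d(T)) ∫_0^T H_m(g(y)) dy tends to 1 as T → ∞ when g is a centered stationary standard Gaussian process with covariance R, where d(T) = √(m!/(H(2H−1))) · T^H L(T)^m. -/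
open MeasureTheory Filter Set
open scoped Topology

noncomputable section

/-- `L : (0,∞) → (0,∞)` is slowly varying at `+∞`. -/
def SlowlyVaryingAtTop (L : ℝ → ℝ) : Prop :=
  ∀ lam : ℝ, 0 < lam → Tendsto (fun x => L (lam * x) / L x) atTop (𝓝 1)

/-- `L` is bounded away from `0` and `+∞` on every compact subset of `(0,∞)`. -/
def BddAwayOnCompacts (L : ℝ → ℝ) : Prop :=
  ∀ K : Set ℝ, K ⊆ Set.Ioi 0 → IsCompact K →
    ∃ c C : ℝ, 0 < c ∧ ∀ x ∈ K, c ≤ L x ∧ L x ≤ C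

lemma vn_uct (h : ℝ → ℝ) (hm : Measurable h)
    (hs : ∀ t : ℝ, Tendsto (fun x => h (x + t) - h x) atTop (𝓝 0)) (ε : ℝ) (hε : 0 < ε) :
    ∃ X : ℝ, ∀ x ≥ X, ∀ t ∈ Icc (0:ℝ) 1, |h (x + t) - h x| ≤ ε := by
  set B : ℝ → Set ℝ := fun x => {t | ε / 2 ≤ |h (x + t) - h x|} with hB
  have hBm : ∀ x, MeasurableSet (B x) := fun x =>
    measurableSet_le measurable_const (by fun_prop)
  have hlim : Tendsto (fun x => ∫ t in Icc (0:ℝ) 3, (B x).indicator (fun _ => (1:ℝ)) t) atTop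
      (𝓝 (∫ t in Icc (0:ℝ) 3, (0:ℝ))) := by
    apply tendsto_integral_filter_of_dominated_convergence (fun _ => (1:ℝ))
    · exact Eventually.of_forall fun x => (measurable_const.indicator (hBm x)).aestronglyMeasurable
    · refine Eventually.of_forall fun x => Eventually.of_forall fun t => ?_
      by_cases ht : t ∈ B x <;> simp [ht]
    · exact integrable_const _
    · refine Eventually.of_forall fun t => ?_
      refine tendsto_const_nhds.congr' ?_
      have := (Metric.tendsto_nhds.1 (hs t)) (ε/2) (by positivity)
      filter_upwards [this] with x hx
      have : t ∉ B x := by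
        simp only [hB, mem_ofPred_eq, not_le]
        simpa [Real.dist_eq] using hx
      simp [this]
  have hmeas : ∀ x, ∫ t in Icc (0:ℝ) 3, (B x).indicator (fun _ => (1:ℝ)) t
      = volume.real (B x ∩ Icc 0 3) := by
    intro x
    rw [integral_indicator (hBm x), Measure.restrict_restrict (hBm x)]
    simp
  simp only [hmeas, integral_zero] at hlim
  have hev := hlim.eventually (gt_mem_nhds (show (0:ℝ) < 1/2 by norm_num))
  obtain ⟨X, hX⟩ := eventually_atTop.1 hev
  refine ⟨X, fun x hx t ht => ?_⟩
  have h1 := hX x hx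
  have h2 := hX (x + t) (by linarith [ht.1])
  by_contra hcon
  push Not at hcon
  have hcov : Icc (1:ℝ) 3 ⊆ (B x ∩ Icc 0 3) ∪ ((fun l => l + (-t)) ⁻¹' (B (x+t) ∩ Icc 0 3)) := by
    intro l hl
    by_contra hno
    simp only [mem_union, not_or, mem_inter_iff, mem_preimage] at hno
    have e1 : l ∉ B x := fun hh => hno.1 ⟨hh, by linarith [hl.1], hl.2⟩
    have e2 : l + -t ∉ B (x+t) := fun hh => hno.2 ⟨hh, by linarith [hl.1, ht.2], by linarith [hl.2, ht.1]⟩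
    simp only [hB, mem_ofPred_eq, not_le] at e1 e2
    rw [show x + t + (l + -t) = x + l by ring] at e2
    rw [abs_lt] at e1 e2
    rcases lt_abs.1 hcon with h | h <;> linarith [e1.1, e1.2, e2.1, e2.2]
  have hle := measureReal_mono (μ := volume) hcov (by
    refine ((measure_union_le _ _).trans_lt ?_).ne
    rw [measure_preimage_add_right]
    exact ENNReal.add_lt_top.2 ⟨(measure_mono inter_subset_right).trans_lt (by simp),
      (measure_mono inter_subset_right).trans_lt (by simp)⟩)
  have hle2 := hle.trans (measureReal_union_le _ _)
  have : volume.real ((fun l => l + (-t)) ⁻¹' (B (x+t) ∩ Icc 0 3)) = volume.real (B (x+t) ∩ Icc 0 3) := by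
    simp only [measureReal_def, measure_preimage_add_right]
  rw [this] at hle2
  simp at hle2
  linarith

lemma vn_steps (h : ℝ → ℝ) (ε X : ℝ) (hε : 0 < ε)
    (hX : ∀ x ≥ X, ∀ t ∈ Icc (0:ℝ) 1, |h (x + t) - h x| ≤ ε) (n : ℕ) :
    ∀ x ≥ X, ∀ t ∈ Icc (0:ℝ) n, |h (x + t) - h x| ≤ n * ε := by
  induction n with
  | zero =>
    intro x hx t ht
    have : t = 0 := by simpa using ht
    simp [this]
  | succ n ih =>
    intro x hx t ht
    push_cast at ht ⊢
    by_cases h1 : t ≤ 1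
    · have := hX x hx t ⟨ht.1, h1⟩
      have : 0 ≤ n * ε := by positivity
      linarith
    · push Not at h1
      have a1 := hX x hx 1 ⟨by norm_num, le_rfl⟩
      have a2 := ih (x+1) (by linarith) (t-1) ⟨by linarith, by linarith [ht.2]⟩
      rw [show x + 1 + (t - 1) = x + t by ring] at a2
      have := abs_sub_le (h (x+t)) (h (x+1)) (h x)
      linarith

lemma vn_potter (l : ℝ → ℝ) (hpos : ∀ x > 0, 0 < l x) (hmeas : Measurable l)
    (hs : ∀ lam : ℝ, 0 < lam → Tendsto (fun x => l (lam * x) / l x) atTop (𝓝 1))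
    (δ : ℝ) (hδ : 0 < δ) :
    ∃ X ≥ 1, ∃ C > 0, ∀ s T, X ≤ s → s ≤ T → l s ≤ C * (T / s) ^ δ * l T := by
  obtain ⟨X, hX⟩ := vn_uct (fun x => Real.log (l (Real.exp x))) (by fun_prop) (by
    intro t
    have h1 := (hs (Real.exp t) (Real.exp_pos t)).comp Real.tendsto_exp_atTop
    have h2 := (Real.continuousAt_log one_ne_zero).tendsto.comp h1
    rw [Real.log_one] at h2
    refine h2.congr fun x => ?_
    simp only [Function.comp]
    rw [Real.log_div (hpos _ (by positivity)).ne' (hpos _ (by positivity)).ne', ← Real.exp_add,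
      add_comm]) δ hδ
  refine ⟨max 1 (Real.exp X), le_max_left _ _, Real.exp δ, Real.exp_pos _, fun s T hsX hsT => ?_⟩
  have hs0 : 0 < s := by linarith [le_max_left 1 (Real.exp X)]
  have hT0 : 0 < T := by linarith
  have hXs : X ≤ Real.log s := (Real.le_log_iff_exp_le hs0).2 ((le_max_right _ _).trans hsX)
  set t := Real.log T - Real.log s with ht
  have ht0 : 0 ≤ t := sub_nonneg.2 (Real.log_le_log hs0 hsT)
  have key := vn_steps (fun x => Real.log (l (Real.exp x))) δ X hδ hX ⌈t⌉₊ (Real.log s) hXs t ⟨ht0, Nat.le_ceil t⟩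
  beta_reduce at key
  rw [show Real.log s + t = Real.log T by rw [ht]; ring, Real.exp_log hs0, Real.exp_log hT0] at key
  have hc := (Nat.ceil_lt_add_one ht0).le
  have h3 : Real.log (l s) ≤ δ + δ * t + Real.log (l T) := by
    have := (abs_le.1 key).1
    nlinarith
  have h4 := Real.exp_le_exp.2 h3
  rw [Real.exp_log (hpos s hs0), Real.exp_add, Real.exp_add, Real.exp_log (hpos T hT0)] at h4
  rwa [Real.rpow_def_of_pos (by positivity), Real.log_div hT0.ne' hs0.ne', mul_comm _ δ]

lemma vn_dom (l f : ℝ → ℝ) (a δ : ℝ) (hpos : ∀ x > 0, 0 < l x) (hmeas : Measurable l)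
    (hs : ∀ lam : ℝ, 0 < lam → Tendsto (fun x => l (lam * x) / l x) atTop (𝓝 1))
    (hδ : 0 < δ) (ha : 0 < a) (hf : ∀ x, |f x| ≤ 1)
    (hlim : Tendsto (fun x => f x / (x ^ (-a) * l x)) atTop (𝓝 1)) :
    ∃ X > 0, ∃ C > 0, ∀ T ≥ X, ∀ u ∈ Ioc (0:ℝ) 1,
      |f (T * u) / (T ^ (-a) * l T)| ≤ C * u ^ (-(a + δ)) := by
  obtain ⟨X0, hX0, C, hC, hP⟩ := vn_potter l hpos hmeas hs δ hδ
  have hev := hlim.abs.eventually (gt_mem_nhds (show |(1:ℝ)| < 2 by norm_num))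
  obtain ⟨X1, hX1⟩ := eventually_atTop.1 hev
  set X := max X0 X1
  have hX : 0 < X := by linarith [le_max_left X0 X1]
  have hlX := hpos X hX
  refine ⟨X, hX, 2 * C + C * X ^ a / l X, by positivity, fun T hT u hu => ?_⟩
  have hT0 : 0 < T := by linarith
  have hu0 := hu.1
  have hlT := hpos T hT0
  rw [abs_div, abs_of_pos (show 0 < T ^ (-a) * l T by positivity), div_le_iff₀ (by positivity)]
  have hu' : 0 < T * u := by positivity
  by_cases hc : X ≤ T * u
  · have h1 := (hX1 (T*u) ((le_max_right _ _).trans hc)).le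
    have hlu := hpos _ hu'
    rw [abs_div, abs_of_pos (show 0 < (T*u) ^ (-a) * l (T*u) by positivity), div_le_iff₀ (by positivity)] at h1
    have h2 := hP (T*u) T ((le_max_left _ _).trans hc) (by nlinarith [hu.2])
    have e1 : T / (T * u) = u⁻¹ := by field_simp
    rw [e1, Real.inv_rpow hu0.le, ← Real.rpow_neg hu0.le] at h2
    calc |f (T*u)| ≤ _ := h1
      _ ≤ 2 * ((T*u)^(-a) * (C * u ^ (-δ) * l T)) := by gcongr
      _ = 2 * C * u ^ (-(a+δ)) * (T ^ (-a) * l T) := by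
        rw [Real.mul_rpow hT0.le hu0.le, neg_add, Real.rpow_add hu0]; ring
      _ ≤ _ := by gcongr; linarith [show 0 < C * X ^ a / l X by positivity]
  · push Not at hc
    have h2 := hP X T (le_max_left _ _) hT
    have h3 : T ^ (a + δ) ≤ (X / u) ^ (a + δ) := by
      apply Real.rpow_le_rpow hT0.le _ (by positivity)
      rw [le_div_iff₀ hu0]; exact hc.le
    have h5 : l X * T ^ a ≤ C * X ^ a * u ^ (-(a+δ)) * l T := by
      calc l X * T ^ a ≤ (C * (T / X) ^ δ * l T) * T ^ a := by gcongr
        _ = C * X ^ (-δ) * l T * T ^ (a + δ) := by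
          rw [Real.div_rpow hT0.le hX.le, Real.rpow_neg hX.le, Real.rpow_add hT0]; ring
        _ ≤ C * X ^ (-δ) * l T * (X / u) ^ (a + δ) := by gcongr
        _ = _ := by
          rw [Real.div_rpow hX.le hu0.le, Real.rpow_neg hX.le, Real.rpow_neg hu0.le, Real.rpow_add hX]
          have : X ^ δ ≠ 0 := by positivity
          field_simp
    calc |f (T*u)| ≤ 1 := hf _
      _ = (l X * T ^ a) * T ^ (-a) / l X := by
        rw [Real.rpow_neg hT0.le]
        have : T ^ a ≠ 0 := by positivity
        field_simp
      _ ≤ (C * X ^ a * u ^ (-(a+δ)) * l T) * T ^ (-a) / l X := by gcongr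
      _ = C * X ^ a / l X * u ^ (-(a+δ)) * (T ^ (-a) * l T) := by ring
      _ ≤ _ := by gcongr; linarith

lemma vn_ii (f : ℝ → ℝ) (hm : Measurable f) (hf : ∀ x, |f x| ≤ 1) (p q : ℝ) :
    IntervalIntegrable f volume p q := by
  refine (intervalIntegrable_const (c := (1:ℝ))).mono_fun hm.aestronglyMeasurable ?_
  exact Eventually.of_forall fun x => by simpa using hf x

lemma vn_double (f : ℝ → ℝ) (hm : Measurable f) (hf : ∀ x, |f x| ≤ 1) (T : ℝ) (hT : 0 < T) :
    ∫ s in (0:ℝ)..T, ∫ t in (0:ℝ)..T, f |s - t| =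
      2 * T ^ 2 * ∫ v in (0:ℝ)..1, ∫ u in (0:ℝ)..v, f (T * u) := by
  set G : ℝ → ℝ := fun x => ∫ u in (0:ℝ)..x, f u with hG
  have hGc : Continuous G := intervalIntegral.continuous_primitive (fun p q => vn_ii f hm hf p q) 0
  have h1 : ∫ s in (0:ℝ)..T, ∫ t in (0:ℝ)..T, f |s - t| = ∫ s in (0:ℝ)..T, (G s + G (T - s)) := by
    apply intervalIntegral.integral_congr
    intro s hs
    rw [uIcc_of_le hT.le] at hs
    have hi : ∀ p q, IntervalIntegrable (fun t => f |s - t|) volume p q := fun p q =>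
      vn_ii _ (by fun_prop) (fun x => hf _) p q
    beta_reduce
    rw [← intervalIntegral.integral_add_adjacent_intervals (hi 0 s) (hi s T)]
    congr 1
    · have : ∫ t in (0:ℝ)..s, f |s - t| = ∫ t in (0:ℝ)..s, f (s - t) := by
        apply intervalIntegral.integral_congr
        intro t ht
        rw [uIcc_of_le hs.1] at ht
        beta_reduce
        rw [abs_of_nonneg (by linarith [ht.2])]
      rw [this, intervalIntegral.integral_comp_sub_left (fun t => f t) s]
      simp [hG]
    · have : ∫ t in s..T, f |s - t| = ∫ t in s..T, f (t - s) := by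
        apply intervalIntegral.integral_congr
        intro t ht
        rw [uIcc_of_le hs.2] at ht
        beta_reduce
        rw [abs_sub_comm, abs_of_nonneg (by linarith [ht.1])]
      rw [this, intervalIntegral.integral_comp_sub_right (fun t => f t) s]
      simp [hG]
  have h2 : ∫ s in (0:ℝ)..T, G (T - s) = ∫ s in (0:ℝ)..T, G s := by
    rw [intervalIntegral.integral_comp_sub_left (fun t => G t) T]; simp
  rw [h1, intervalIntegral.integral_add (hGc.intervalIntegrable _ _)
    ((show Continuous fun s => G (T - s) from
      hGc.comp (by fun_prop : Continuous fun s => T - s)).intervalIntegrable _ _), h2]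
  have h3 : ∀ v, ∫ u in (0:ℝ)..v, f (T * u) = T⁻¹ * G (T * v) := by
    intro v
    rw [intervalIntegral.integral_comp_mul_left (fun t => f t) hT.ne']
    simp [hG]
  simp only [h3]
  rw [intervalIntegral.integral_const_mul,
    intervalIntegral.integral_comp_mul_left (fun t => G t) hT.ne']
  simp only [mul_zero, mul_one, smul_eq_mul]
  field_simp
  ring

lemma vn_main (l f : ℝ → ℝ) (a : ℝ) (hpos : ∀ x > 0, 0 < l x) (hmeas : Measurable l)
    (hs : ∀ lam : ℝ, 0 < lam → Tendsto (fun x => l (lam * x) / l x) atTop (𝓝 1))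
    (ha : 0 < a) (ha1 : a < 1) (hfm : Measurable f) (hf : ∀ x, |f x| ≤ 1)
    (hlim : Tendsto (fun x => f x / (x ^ (-a) * l x)) atTop (𝓝 1)) :
    Tendsto (fun T : ℝ => (∫ s in (0:ℝ)..T, ∫ t in (0:ℝ)..T, f |s - t|) / (T ^ (2 - a) * l T))
      atTop (𝓝 (2 / ((1 - a) * (2 - a)))) := by
  obtain ⟨X, hX, C, hC, hdom⟩ := vn_dom l f a ((1 - a) / 2) hpos hmeas hs (by linarith) ha hf hlim
  set b := -(a + (1 - a) / 2) with hb
  have hb1 : -1 < b := by rw [hb]; linarith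
  have hpt : ∀ u > 0, Tendsto (fun T => f (T * u) / (T ^ (-a) * l T)) atTop (𝓝 (u ^ (-a))) := by
    intro u hu
    have h1 := hlim.comp (tendsto_id.atTop_mul_const hu : Tendsto (fun T : ℝ => T * u) atTop atTop)
    have h2 := (h1.mul (hs u hu)).mul_const (u ^ (-a))
    simp only [one_mul] at h2
    refine h2.congr' ?_
    filter_upwards [eventually_gt_atTop 0] with T hT
    have p1 := hpos T hT
    have p2 := hpos (T * u) (by positivity)
    simp only [Function.comp]
    rw [mul_comm u T, Real.mul_rpow hT.le hu.le]
    have p3 : 0 < T ^ (-a) := by positivity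
    have p4 : 0 < u ^ (-a) := by positivity
    field_simp
  have hbi : ∀ p q, IntervalIntegrable (fun u : ℝ => C * u ^ b) volume p q := fun p q =>
    (intervalIntegral.intervalIntegrable_rpow' hb1).const_mul C
  have hin : ∀ v ∈ Ioc (0:ℝ) 1, Tendsto (fun T => ∫ u in (0:ℝ)..v, f (T * u) / (T ^ (-a) * l T)) atTop
      (𝓝 (∫ u in (0:ℝ)..v, u ^ (-a))) := by
    intro v hv
    apply intervalIntegral.tendsto_integral_filter_of_dominated_convergence (fun u => C * u ^ b)
    · exact Eventually.of_forall fun T =>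
        (show Measurable fun u => f (T * u) / (T ^ (-a) * l T) by fun_prop).aestronglyMeasurable
    · filter_upwards [eventually_ge_atTop X] with T hT
      refine Eventually.of_forall fun u hu => ?_
      rw [uIoc_of_le hv.1.le] at hu
      exact hdom T hT u ⟨hu.1, hu.2.trans hv.2⟩
    · exact hbi _ _
    · refine Eventually.of_forall fun u hu => ?_
      rw [uIoc_of_le hv.1.le] at hu
      exact hpt u hu.1
  have hout : Tendsto (fun T => ∫ v in (0:ℝ)..1, ∫ u in (0:ℝ)..v, f (T * u) / (T ^ (-a) * l T)) atTop
      (𝓝 (∫ v in (0:ℝ)..1, ∫ u in (0:ℝ)..v, u ^ (-a))) := by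
    apply intervalIntegral.tendsto_integral_filter_of_dominated_convergence
      (fun _ => ∫ u in (0:ℝ)..1, C * u ^ b)
    · refine Eventually.of_forall fun T => ?_
      refine (intervalIntegral.continuous_primitive (fun p q => ?_) 0).aestronglyMeasurable
      exact (vn_ii (fun u => f (T * u)) (by fun_prop) (fun x => hf _) p q).div_const _
    · filter_upwards [eventually_ge_atTop X] with T hT
      refine Eventually.of_forall fun v hv => ?_
      rw [uIoc_of_le zero_le_one] at hv
      refine (intervalIntegral.norm_integral_le_of_norm_le hv.1.le
        (Eventually.of_forall fun u hu => hdom T hT u ⟨hu.1, hu.2.trans hv.2⟩) (hbi _ _)).trans ?_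
      apply intervalIntegral.integral_mono_interval le_rfl hv.1.le hv.2 _ (hbi _ _)
      refine (ae_restrict_iff' measurableSet_Ioc).2 (Eventually.of_forall fun u hu => ?_)
      have := hu.1
      simp only [Pi.zero_apply]
      positivity
    · exact intervalIntegrable_const
    · refine Eventually.of_forall fun v hv => ?_
      rw [uIoc_of_le zero_le_one] at hv
      exact hin v hv
  have hval : ∫ v in (0:ℝ)..1, ∫ u in (0:ℝ)..v, u ^ (-a) = 1 / ((1 - a) * (2 - a)) := by
    have e : ∀ v : ℝ, ∫ u in (0:ℝ)..v, u ^ (-a) = v ^ (1 - a) / (1 - a) := by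
      intro v
      rw [integral_rpow (Or.inl (by linarith)), Real.zero_rpow (by linarith), sub_zero,
        show -a + 1 = 1 - a by ring]
    simp only [e]
    rw [intervalIntegral.integral_div, integral_rpow (Or.inl (by linarith)),
      Real.zero_rpow (by linarith), Real.one_rpow, show 1 - a + 1 = 2 - a by ring]
    have : 1 - a ≠ 0 := by linarith
    have : 2 - a ≠ 0 := by linarith
    field_simp
    ring
  rw [hval] at hout
  have hfin := hout.const_mul 2
  rw [mul_one_div] at hfin
  refine hfin.congr' ?_
  filter_upwards [eventually_gt_atTop 0] with T hT
  rw [vn_double f hfm hf T hT]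
  simp only [intervalIntegral.integral_div]
  rw [sub_eq_add_neg, Real.rpow_add hT, Real.rpow_two]
  have p1 := hpos T hT
  have p3 : 0 < T ^ (-a) := by positivity
  field_simp

/-- Identification of the normalization `d(T)² = (m!/(H(2H-1))) T^{2H} L(T)^{2m}` in Taqqu's
theorem: if `R(x)/(x^{2H₀-2}L(x)²) → 1`, then
`(∫_0^T ∫_0^T R(|s-t|)^m ds dt) / (T^{2H} L(T)^{2m}) → 1/(H(2H-1))` as `T → ∞`.
Via `E[H_m(g(s))H_m(g(t))] = m! R(|s-t|)^m`, this says that the variance of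
`(1/d(T)) ∫_0^T H_m(g(y)) dy` tends to `1`. -/
theorem variance_normalization
    (m : ℕ) (hm : 1 ≤ m) (H₀ H : ℝ) (hH₀ : H₀ ∈ Set.Ioo (1 - 1 / (2 * (m : ℝ))) 1)
    (hH : H = 1 + m * (H₀ - 1))
    (L : ℝ → ℝ) (hLpos : ∀ x > 0, 0 < L x) (hLmeas : Measurable L)
    (hLslow : SlowlyVaryingAtTop L) (hLbdd : BddAwayOnCompacts L)
    (R : ℝ → ℝ) (hRmeas : Measurable R) (hR1 : ∀ x > 0, R x ∈ Set.Icc (-1 : ℝ) 1)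
    (hRasymp : Tendsto (fun x => R x / (x ^ (2 * H₀ - 2) * L x ^ 2)) atTop (𝓝 1)) :
    Tendsto
      (fun T : ℝ =>
        (∫ s in (0 : ℝ)..T, ∫ t in (0 : ℝ)..T, R |s - t| ^ m) / (T ^ (2 * H) * L T ^ (2 * m)))
      atTop (𝓝 (1 / (H * (2 * H - 1)))) := by
  have hm0 : (0:ℝ) < m := by exact_mod_cast hm
  set a : ℝ := 2 - 2 * H with ha
  have ha' : a = m * (2 - 2 * H₀) := by rw [ha, hH]; ring
  have ha0 : 0 < a := by rw [ha']; exact mul_pos hm0 (by linarith [hH₀.2])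
  have ha1 : a < 1 := by
    have h1 := hH₀.1
    have h2 : 1 - H₀ < 1 / (2 * (m:ℝ)) := by linarith
    rw [lt_div_iff₀ (by positivity)] at h2
    rw [ha']; linarith
  set f : ℝ → ℝ := (Ioi (0:ℝ)).indicator (fun x => R x ^ m) with hfdef
  have hfpos : ∀ x > 0, f x = R x ^ m := fun x hx => indicator_of_mem (mem_Ioi.2 hx) _
  have hfm : Measurable f := (hRmeas.pow_const m).indicator measurableSet_Ioi
  have hf : ∀ x, |f x| ≤ 1 := by
    intro x
    by_cases hx : 0 < x
    · rw [hfpos x hx, abs_pow]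
      exact pow_le_one₀ (abs_nonneg _) (abs_le.2 ⟨(hR1 x hx).1, (hR1 x hx).2⟩)
    · rw [hfdef, indicator_of_notMem (by simpa using hx)]; simp
  have key := vn_main (fun x => L x ^ (2 * m)) f a (fun x hx => pow_pos (hLpos x hx) _)
    (hLmeas.pow_const _) (fun lam hlam => by
      have := (hLslow lam hlam).pow (2 * m)
      simpa only [div_pow, one_pow] using this) ha0 ha1 hfm hf (by
      have := hRasymp.pow m
      rw [one_pow] at this
      refine this.congr' ?_
      filter_upwards [eventually_gt_atTop 0] with x hx
      rw [hfpos x hx, div_pow, mul_pow, ← pow_mul, ← Real.rpow_natCast (x ^ (2 * H₀ - 2)) m,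
        ← Real.rpow_mul hx.le, ha', show (2 * H₀ - 2) * (m:ℝ) = -(m * (2 - 2 * H₀)) by ring])
  have hval : 2 / ((1 - a) * (2 - a)) = 1 / (H * (2 * H - 1)) := by
    rw [ha, show (1 - (2 - 2 * H)) * (2 - (2 - 2 * H)) = 2 * (H * (2 * H - 1)) by ring,
      ← div_div, div_self two_ne_zero]
  rw [hval] at key
  refine key.congr fun T => ?_
  rw [show 2 - a = 2 * H by rw [ha]; ring]
  congr 1
  apply intervalIntegral.integral_congr
  intro s _
  apply intervalIntegral.integral_congr_ae
  have : ∀ᵐ t : ℝ, t ≠ s := by simp [ae_iff]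
  filter_upwards [this] with t ht _
  exact hfpos _ (abs_pos.2 (sub_ne_zero.2 ht.symm))

end
end

section
/- Let ν be the standard Gaussian measure on ℝ. For every t ≥ 0, every nonnegative integer k and every x ∈ ℝ, ∫_ℝ H_k( e^{−t} x + √(1 − e^{−2t}) y ) ν(dy) = e^{−kt} H_k(x). In other words, the Ornstein–Uhlenbeck semigroup P_t ψ(x) = ∫_ℝ ψ(e^{−t}x + √(1 − e^{−2t}) y) ν(dy) satisfies P_t H_k = e^{−kt} H_k. -/
open MeasureTheory ProbabilityTheory Filter Set
open scoped Topology

noncomputable section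

/-- The `n`-th probabilists' Hermite polynomial, as a function `ℝ → ℝ`. -/
def hermiteR (n : ℕ) (x : ℝ) : ℝ := Polynomial.aeval x (Polynomial.hermite n)

/-- The standard Gaussian measure on `ℝ`. -/
def stdGaussian : Measure ℝ := gaussianReal 0 1

open Polynomial in
theorem aux_integrable (q : Polynomial ℝ) :
    Integrable (fun y => q.eval y) (gaussianReal 0 1) := by
  induction q using Polynomial.induction_on' with
  | add p q hp hq => simp only [eval_add]; exact hp.add hq
  | monomial n a =>
    simp only [eval_monomial]
    refine Integrable.const_mul ?_ a
    have h := (memLp_id_gaussianReal (μ := 0) (v := 1) (n : NNReal))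
    have := h.integrable_norm_pow'
    rw [← integrable_norm_iff (by fun_prop)]
    simpa using this

theorem aux_integrable_vol (q : Polynomial ℝ) :
    Integrable (fun y => q.eval y * gaussianPDFReal 0 1 y) := by
  have h := aux_integrable q
  rw [gaussianReal_of_var_ne_zero 0 one_ne_zero, gaussianPDF_def] at h
  rw [integrable_withDensity_iff_integrable_smul₀' (by fun_prop) (by simp)] at h
  refine h.congr (Filter.Eventually.of_forall fun y => ?_)
  simp [ENNReal.toReal_ofReal (gaussianPDFReal_nonneg 0 1 y), mul_comm]

theorem aux_pdf_deriv (y : ℝ) :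
    HasDerivAt (gaussianPDFReal 0 1) (-y * gaussianPDFReal 0 1 y) y := by
  rw [gaussianPDFReal_def]
  have h : HasDerivAt (fun x : ℝ => -(x - 0) ^ 2 / (2 * ((1 : NNReal) : ℝ))) (-y) y := by
    have := ((((hasDerivAt_id y).sub_const 0).pow 2).neg).div_const (2 * ((1 : NNReal) : ℝ))
    exact this.congr_deriv (by simp; ring)
  exact (h.exp.const_mul _).congr_deriv (by ring)

open Polynomial in
theorem aux_ibp (q : Polynomial ℝ) :
    ∫ y, y * q.eval y ∂(gaussianReal 0 1) = ∫ y, (derivative q).eval y ∂(gaussianReal 0 1) := by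
  have h0 : ∫ y, ((derivative q - X * q).eval y * gaussianPDFReal 0 1 y) = 0 := by
    refine integral_eq_zero_of_hasDerivAt_of_integrable
      (f := fun y => q.eval y * gaussianPDFReal 0 1 y) (fun y => ?_)
      (aux_integrable_vol _) (aux_integrable_vol _)
    exact ((q.hasDerivAt y).mul (aux_pdf_deriv y)).congr_deriv (by simp; ring)
  have h1 : ∫ y, (derivative q - X * q).eval y ∂(gaussianReal 0 1) = 0 := by
    rw [integral_gaussianReal_eq_integral_smul one_ne_zero]
    refine Eq.trans ?_ h0
    exact integral_congr_ae (Filter.Eventually.of_forall fun y => by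
      simp only [smul_eq_mul]; ring)
  have h2 := aux_integrable (X * q)
  simp only [eval_sub] at h1
  rw [integral_sub (aux_integrable _) h2] at h1
  simp only [eval_mul, eval_X] at h1
  linarith

open Polynomial in
theorem aux_deriv (n : ℕ) :
    derivative (hermite (n + 1)) = ((n : ℤ[X]) + 1) * hermite n := by
  induction n with
  | zero => simp
  | succ n ih =>
    rw [hermite_succ (n + 1), derivative_sub, derivative_mul, ih, hermite_succ n]
    simp
    ring

/-- The Hermite polynomial precomposed with an affine map. -/
def auxQ (k : ℕ) (c b : ℝ) : Polynomial ℝ :=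
  ((Polynomial.hermite k).map (Int.castRingHom ℝ)).comp
    (Polynomial.C c + Polynomial.C b * Polynomial.X)

open Polynomial in
theorem auxQ_eval (k : ℕ) (c b y : ℝ) : (auxQ k c b).eval y = hermiteR k (c + b * y) := by
  simp [auxQ, hermiteR, eval_map, aeval_def]

open Polynomial in
theorem aux_rec (n : ℕ) (x : ℝ) :
    hermiteR (n + 2) x = x * hermiteR (n + 1) x - (n + 1) * hermiteR n x := by
  unfold hermiteR
  rw [hermite_succ (n + 1), aux_deriv]
  simp

open Polynomial in
theorem auxQ_deriv (k : ℕ) (c b y : ℝ) :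
    (derivative (auxQ (k + 1) c b)).eval y = b * ((k + 1) * (auxQ k c b).eval y) := by
  rw [auxQ, derivative_comp, derivative_map, aux_deriv]
  simp [auxQ]

theorem aux_main (a b : ℝ) (hab : a ^ 2 + b ^ 2 = 1) (x : ℝ) (k : ℕ) :
    ∫ y, hermiteR k (a * x + b * y) ∂(gaussianReal 0 1) = a ^ k * hermiteR k x := by
  induction k using Nat.twoStepInduction with
  | zero => simp [hermiteR]
  | one =>
    have h1 : Integrable (fun y : ℝ => y) (gaussianReal 0 1) := by
      simpa using aux_integrable Polynomial.X
    simp only [hermiteR, Polynomial.hermite_one, Polynomial.aeval_X, pow_one]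
    rw [integral_add (integrable_const _) (h1.const_mul b), integral_const_mul b,
      integral_id_gaussianReal]
    simp
  | more n ih0 ih1 =>
    have hi := fun k => aux_integrable (auxQ k (a * x) b)
    have hX := aux_integrable (Polynomial.X * auxQ (n + 1) (a * x) b)
    have hibp := aux_ibp (auxQ (n + 1) (a * x) b)
    simp only [auxQ_deriv, integral_const_mul] at hibp
    simp only [Polynomial.eval_mul, Polynomial.eval_X] at hX
    simp only [auxQ_eval] at hi hX hibp
    have e : ∀ y, hermiteR (n + 2) (a * x + b * y)
        = a * x * hermiteR (n + 1) (a * x + b * y)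
          + b * (y * hermiteR (n + 1) (a * x + b * y))
          - (n + 1) * hermiteR n (a * x + b * y) := fun y => by rw [aux_rec]; ring
    simp only [e]
    have hs : Integrable (fun y => a * x * hermiteR (n + 1) (a * x + b * y)
          + b * (y * hermiteR (n + 1) (a * x + b * y))) (gaussianReal 0 1) :=
      ((hi _).const_mul _).add (hX.const_mul _)
    rw [integral_sub hs ((hi _).const_mul _),
      integral_add ((hi _).const_mul _) (hX.const_mul _)]
    simp only [integral_const_mul]
    rw [hibp, ih0, ih1, aux_rec]
    have hb : b ^ 2 = 1 - a ^ 2 := by linarith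
    linear_combination ((n : ℝ) + 1) * a ^ n * hermiteR n x * hb

/-- Mehler's formula / Ornstein–Uhlenbeck semigroup on Hermite polynomials:
`P_t H_k = e^{-kt} H_k`, i.e.
`∫ H_k(e^{-t} x + √(1 - e^{-2t}) y) ν(dy) = e^{-kt} H_k(x)`. -/
theorem ou_semigroup_hermite (t : ℝ) (ht : 0 ≤ t) (k : ℕ) (x : ℝ) :
    ∫ y, hermiteR k (Real.exp (-t) * x + Real.sqrt (1 - Real.exp (-(2 * t))) * y) ∂stdGaussian
      = Real.exp (-(k : ℝ) * t) * hermiteR k x := by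
  have h1 : Real.exp (-(2 * t)) ≤ 1 := Real.exp_le_one_iff.mpr (by linarith)
  have h2 : Real.exp (-(2 * t)) = Real.exp (-t) ^ 2 := by
    rw [← Real.exp_nat_mul]; congr 1; push_cast; ring
  have h := aux_main (Real.exp (-t)) (Real.sqrt (1 - Real.exp (-(2 * t))))
    (by rw [Real.sq_sqrt (by linarith), h2]; ring) x k
  rw [_root_.stdGaussian, h, ← Real.exp_nat_mul]
  congr 2
  ring

end
end

section
/- Let r ∈ (0, 1), let a : ℝ → ℝ be measurable with r ≤ a(x) ≤ 1/r for all x, let ε > 0, let f : [0,1] → ℝ be continuous with F(x) = ∫_0^x f(y) dy, let b ∈ ℝ and let a* > 0 be a constant. Set q(x) = 1/a(x) − 1/a*, c* = a* b + ∫_0^1 F(y) dy, c^ε = ( b + ∫_0^1 F(y)/a(y/ε) dy ) / ( ∫_0^1 1/a(y/ε) dy ), u^ε(x) = c^ε ∫_0^x 1/a(y/ε) dy − ∫_0^x F(y)/a(y/ε) dy, ū(x) = c* x / a* − ∫_0^x F(y)/a* dy, F(x, y) = (c* − F(y)) 1_{[0,x]}(y) + x ( F(y) − ∫_0^1 F(z)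 dz − a* b ) 1_{[0,1]}(y), and ρ^ε = ( a* / ∫_0^1 a(y/ε)^{−1} dy ) [ ( a* b + ∫_0^1 F(y) dy )( ∫_0^1 q(y/ε) dy )² − ( ∫_0^1 F(y) q(y/ε) dy )( ∫_0^1 q(y/ε) dy ) ]. Then for every x ∈ [0,1], u^ε(x) − ū(x) = ∫_ℝ F(x, y) q(y/ε) dy + (c^ε − c*) ∫_0^x q(y/ε) dy + ρ^ε x / a*. -/
open MeasureTheory Filter Set
open scoped Topology

noncomputable section

/-- Decomposition of the corrector `uᵉ - ū` into the leading oscillatory-integral term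
`∫_ℝ F(x,y) q(y/ε) dy`, the term `(cᵉ - c*) ∫_0^x q(y/ε) dy` and the remainder `ρᵉ x / a*`. -/
theorem corrector_decomposition
    (r : ℝ) (hr : r ∈ Set.Ioo (0 : ℝ) 1)
    (a : ℝ → ℝ) (hameas : Measurable a) (ha : ∀ x, r ≤ a x ∧ a x ≤ 1 / r)
    (ε : ℝ) (hε : 0 < ε)
    (f : ℝ → ℝ) (hf : ContinuousOn f (Set.Icc 0 1)) (b : ℝ)
    (astar : ℝ) (hastar : 0 < astar)
    (F : ℝ → ℝ) (hF : ∀ x, F x = ∫ y in (0 : ℝ)..x, f y)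
    (q : ℝ → ℝ) (hq : ∀ x, q x = 1 / a x - 1 / astar)
    (cstar : ℝ) (hcstar : cstar = astar * b + ∫ y in (0 : ℝ)..1, F y)
    (cε : ℝ)
    (hcε : cε = (b + ∫ y in (0 : ℝ)..1, F y / a (y / ε)) / (∫ y in (0 : ℝ)..1, 1 / a (y / ε)))
    (uε : ℝ → ℝ)
    (huε : ∀ x, uε x =
      cε * (∫ y in (0 : ℝ)..x, 1 / a (y / ε)) - ∫ y in (0 : ℝ)..x, F y / a (y / ε))
    (ubar : ℝ → ℝ)
    (hubar : ∀ x, ubar x = cstar * x / astar - ∫ y in (0 : ℝ)..x, F y / astar)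
    (Fk : ℝ → ℝ → ℝ)
    (hFk : ∀ x y, Fk x y =
      (cstar - F y) * Set.indicator (Set.Icc 0 x) (fun _ => (1 : ℝ)) y
        + x * (F y - (∫ z in (0 : ℝ)..1, F z) - astar * b)
            * Set.indicator (Set.Icc (0 : ℝ) 1) (fun _ => (1 : ℝ)) y)
    (ρε : ℝ)
    (hρε : ρε = (astar / ∫ y in (0 : ℝ)..1, 1 / a (y / ε)) *
      ((astar * b + ∫ y in (0 : ℝ)..1, F y) * (∫ y in (0 : ℝ)..1, q (y / ε)) ^ 2
        - (∫ y in (0 : ℝ)..1, F y * q (y / ε)) * (∫ y in (0 : ℝ)..1, q (y / ε)))) :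
    ∀ x ∈ Set.Icc (0 : ℝ) 1,
      uε x - ubar x = (∫ y, Fk x y * q (y / ε))
        + (cε - cstar) * (∫ y in (0 : ℝ)..x, q (y / ε)) + ρε * x / astar := by
  intro x hx
  obtain ⟨hx0, hx1⟩ := hx
  have hr0 : 0 < r := hr.1
  have hFc : ContinuousOn F (Set.uIcc 0 1) := by
    have h1 : IntegrableOn f (Set.uIcc 0 1) := by
      rw [Set.uIcc_of_le zero_le_one]
      exact hf.integrableOn_Icc
    have h2 := intervalIntegral.continuousOn_primitive_interval (μ := volume) h1
    exact h2.congr (fun y _ => hF y)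
  have hw : ∀ s t : ℝ, IntervalIntegrable (fun y => 1 / a (y / ε)) volume s t := by
    intro s t
    refine (intervalIntegrable_const (c := 1 / r)).mono_fun' ?_ ?_
    · exact (measurable_const.div (hameas.comp (measurable_id.div_const ε))).aestronglyMeasurable
    · refine Filter.Eventually.of_forall (fun y => ?_)
      have h := (ha (y / ε)).1
      have h' : 0 < a (y / ε) := lt_of_lt_of_le hr0 h
      beta_reduce
      rw [Real.norm_of_nonneg (by positivity)]
      exact one_div_le_one_div_of_le hr0 h
  have hqi : ∀ s t : ℝ, IntervalIntegrable (fun y => q (y / ε)) volume s t := by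
    intro s t
    simp only [hq]
    exact (hw s t).sub intervalIntegrable_const
  have hsub : Set.uIcc 0 x ⊆ Set.uIcc 0 1 := by
    rw [Set.uIcc_of_le hx0, Set.uIcc_of_le zero_le_one]
    exact Set.Icc_subset_Icc_right hx1
  have key : ∀ t : ℝ, Set.uIcc 0 t ⊆ Set.uIcc 0 1 →
      IntervalIntegrable F volume 0 t ∧
      IntervalIntegrable (fun y => F y * q (y / ε)) volume 0 t ∧
      (∫ y in (0 : ℝ)..t, 1 / a (y / ε)) = (∫ y in (0 : ℝ)..t, q (y / ε)) + t / astar ∧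
      (∫ y in (0 : ℝ)..t, F y / a (y / ε)) =
        (∫ y in (0 : ℝ)..t, F y * q (y / ε)) + (∫ y in (0 : ℝ)..t, F y) / astar := by
    intro t ht
    have i1 : IntervalIntegrable F volume 0 t := (hFc.mono ht).intervalIntegrable
    have i2 : IntervalIntegrable (fun y => F y * q (y / ε)) volume 0 t :=
      (hqi 0 t).continuousOn_mul (hFc.mono ht)
    refine ⟨i1, i2, ?_, ?_⟩
    · have e : (fun y => 1 / a (y / ε)) = fun y => q (y / ε) + 1 / astar := by
        funext y; rw [hq]; ring
      rw [e, intervalIntegral.integral_add (hqi 0 t) intervalIntegrable_const]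
      simp [div_eq_mul_inv]
    · have e : (fun y => F y / a (y / ε)) = fun y => F y * q (y / ε) + F y / astar := by
        funext y; rw [hq]; ring
      rw [e, intervalIntegral.integral_add i2 (i1.div_const _), intervalIntegral.integral_div]
  obtain ⟨i1, i2, e1, e2⟩ := key 1 subset_rfl
  obtain ⟨j1, j2, g1, g2⟩ := key x hsub
  have hA : 0 < ∫ y in (0 : ℝ)..1, 1 / a (y / ε) :=
    intervalIntegral.intervalIntegral_pos_of_pos (hw 0 1)
      (fun y => one_div_pos.mpr (lt_of_lt_of_le hr0 (ha _).1)) zero_lt_one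
  have hK : (∫ y, Fk x y * q (y / ε)) =
      (cstar * (∫ y in (0 : ℝ)..x, q (y / ε)) - ∫ y in (0 : ℝ)..x, F y * q (y / ε))
      + x * ((∫ y in (0 : ℝ)..1, F y * q (y / ε)) - cstar * ∫ y in (0 : ℝ)..1, q (y / ε)) := by
    have k1 : IntervalIntegrable (fun y => cstar * q (y / ε) - F y * q (y / ε)) volume 0 x :=
      ((hqi 0 x).const_mul _).sub j2
    have k2 : IntervalIntegrable (fun y => x * (F y * q (y / ε) - cstar * q (y / ε)))
        volume 0 1 := (i2.sub ((hqi 0 1).const_mul _)).const_mul _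
    have e : (fun y => Fk x y * q (y / ε)) = fun y =>
        (Set.Icc 0 x).indicator (fun y => cstar * q (y / ε) - F y * q (y / ε)) y
        + (Set.Icc 0 1).indicator (fun y => x * (F y * q (y / ε) - cstar * q (y / ε))) y := by
      funext y
      rw [hFk, hcstar]
      simp only [Set.indicator_apply]
      split_ifs <;> ring
    rw [e, integral_add, integral_indicator measurableSet_Icc, integral_indicator measurableSet_Icc,
      integral_Icc_eq_integral_Ioc, integral_Icc_eq_integral_Ioc,
      ← intervalIntegral.integral_of_le hx0, ← intervalIntegral.integral_of_le zero_le_one,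
      intervalIntegral.integral_sub ((hqi 0 x).const_mul _) j2,
      intervalIntegral.integral_const_mul, intervalIntegral.integral_const_mul,
      intervalIntegral.integral_sub i2 ((hqi 0 1).const_mul _),
      intervalIntegral.integral_const_mul]
    · rw [integrable_indicator_iff measurableSet_Icc]
      exact (intervalIntegrable_iff_integrableOn_Icc_of_le hx0).1 k1
    · rw [integrable_indicator_iff measurableSet_Icc]
      exact (intervalIntegrable_iff_integrableOn_Icc_of_le zero_le_one).1 k2
  rw [hK, huε, hubar, intervalIntegral.integral_div, g1, g2, hρε, ← hcstar]
  rw [e1] at hA hcε ⊢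
  rw [e2] at hcε
  generalize (∫ y in (0 : ℝ)..1, F y * q (y / ε)) = P at *
  generalize (∫ y in (0 : ℝ)..1, q (y / ε)) = Q at *
  generalize (∫ y in (0 : ℝ)..x, F y * q (y / ε)) = Px at *
  generalize (∫ y in (0 : ℝ)..x, q (y / ε)) = Qx at *
  generalize (∫ y in (0 : ℝ)..x, F y) = Mx at *
  generalize (∫ y in (0 : ℝ)..1, F y) = M at *
  have hne : astar ≠ 0 := hastar.ne'
  have hc : cε * (Q + 1 / astar) = cstar / astar + P := by
    rw [hcε, div_mul_cancel₀ _ hA.ne', hcstar]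
    field_simp
    ring
  have hD : cε - cstar = (P - cstar * Q) / (Q + 1 / astar) := by
    rw [eq_div_iff hA.ne', sub_mul, hc]
    ring
  have hR : (cε - cstar) / astar = (P - cstar * Q)
      + (astar / (Q + 1 / astar) * (cstar * Q ^ 2 - P * Q)) / astar := by
    rw [hD]
    have hB := hA.ne'
    generalize hBB : Q + 1 / astar = B at *
    have hQ : Q = B - 1 / astar := by rw [← hBB]; ring
    rw [hQ]
    field_simp
    ring
  linear_combination x * hR

end
end

section
/- Let (Ω, 𝓕, P) be a probability space, m ≥ 1 an integer, H ∈ (1/2, 1), and let L : (0,∞) → (0,∞) be slowly varying at +∞ and bounded away from 0 and +∞ on every compact subset of (0,∞). Let q : ℝ × Ω → ℝ be jointly measurable and uniformly bounded, and suppose there is a constant C₁ such that |E[ q(s, ·) q(t, ·) ]| ≤ C₁ L(|t − s|)^{2m} |t − s|^{−2(1 − H)} for all s ≠ t. Then for every continuous G : [0,1] → ℝ and every ζ ∈ (0, 1) there exists a constant C = C(G, ζ) such that for all ε ∈ (0, ζ), sup_{x ∈ [0,1]} E[ ( ∫_0^x q(y/ε, ·) G(y) dy )² ] ≤ C · ε^{2(1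 − H)} L(1/ε)^{2m}. -/
open MeasureTheory Filter Set
open scoped Topology

noncomputable section

lemma aux_unif (f : ℝ → ℝ) (hf : Measurable f)
    (hs : ∀ t : ℝ, Tendsto (fun u => f (u + t) - f u) atTop (𝓝 0)) :
    ∃ T : ℝ, ∀ u ≥ T, ∀ s ∈ Icc (0:ℝ) 1, |f (u + s) - f u| ≤ 2 := by
  by_contra! hcon
  choose u hu s hsI hbad using fun n : ℕ => hcon (n : ℝ)
  have key : ∀ w : ℕ → ℝ, (∀ n : ℕ, (n:ℝ) ≤ w n) →
      ∀ᶠ n in atTop, (2 : ENNReal) <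
        volume {t : ℝ | t ∈ Icc (0:ℝ) 3 ∧ ∀ k ≥ n, |f (w k + t) - f (w k)| ≤ 1} := by
    intro w hw
    have hmono : Monotone (fun n : ℕ =>
        {t : ℝ | t ∈ Icc (0:ℝ) 3 ∧ ∀ k ≥ n, |f (w k + t) - f (w k)| ≤ 1}) := by
      intro a b hab t ht
      exact ⟨ht.1, fun k hk => ht.2 k (le_trans hab hk)⟩
    have h := tendsto_measure_iUnion_atTop (μ := volume) hmono
    have hU : (⋃ n : ℕ, {t : ℝ | t ∈ Icc (0:ℝ) 3 ∧ ∀ k ≥ n, |f (w k + t) - f (w k)| ≤ 1})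
        = Icc (0:ℝ) 3 := by
      ext t
      simp only [mem_iUnion, mem_setOf_eq]
      constructor
      · rintro ⟨n, h, -⟩
        exact h
      · intro ht
        have hw' : Tendsto w atTop atTop :=
          tendsto_atTop_mono hw tendsto_natCast_atTop_atTop
        have h1 := ((hs t).comp hw').abs
        rw [abs_zero] at h1
        have h2 := h1.eventually (eventually_le_nhds (show (0:ℝ) < 1 by norm_num))
        obtain ⟨n, hn⟩ := eventually_atTop.1 h2
        exact ⟨n, ht, fun k hk => hn k hk⟩
    rw [hU, Real.volume_Icc] at h
    refine h.eventually (lt_mem_nhds ?_)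
    rw [sub_zero, ENNReal.lt_ofReal_iff_toReal_lt (by simp)]
    norm_num
  have k1 := key u hu
  have k2 := key (fun n => u n + s n) (fun n => by have := hu n; linarith [(hsI n).1])
  obtain ⟨n, h1, h2⟩ := (k1.and k2).exists
  set V := {t : ℝ | t ∈ Icc (0:ℝ) 3 ∧ ∀ k ≥ n, |f (u k + t) - f (u k)| ≤ 1} with hV
  set W := {t : ℝ | t ∈ Icc (0:ℝ) 3 ∧
    ∀ k ≥ n, |f (u k + s k + t) - f (u k + s k)| ≤ 1} with hW
  have hVm : MeasurableSet V := by
    have : V = Icc (0:ℝ) 3 ∩ ⋂ k : ℕ, ⋂ (_ : k ≥ n), {t | |f (u k + t) - f (u k)| ≤ 1} := by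
      ext t; simp [hV]
    rw [this]
    refine measurableSet_Icc.inter (MeasurableSet.iInter fun k => MeasurableSet.iInter fun _ => ?_)
    exact measurableSet_le (by fun_prop) measurable_const
  have hW' : volume ((fun t => t + (- s n)) ⁻¹' W) = volume W := measure_preimage_add_right _ _ _
  have hne : (((fun t => t + (- s n)) ⁻¹' W) ∩ V).Nonempty := by
    refine nonempty_inter_of_measure_lt_add volume hVm (u := Icc (0:ℝ) 4) ?_ ?_ ?_
    · intro t ht
      have := ht.1
      have h3 := hsI n
      simp only [mem_Icc] at this h3 ⊢
      constructor <;> linarith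
    · intro t ht
      have := ht.1
      simp only [mem_Icc] at this ⊢
      constructor <;> linarith
    · rw [hW', Real.volume_Icc]
      have : ENNReal.ofReal (4 - 0) = 2 + 2 := by
        rw [sub_zero, show (4:ℝ) = 2 + 2 by norm_num, ENNReal.ofReal_add (by norm_num) (by norm_num)]
        simp
      rw [this]
      exact ENNReal.add_lt_add h2 h1
  obtain ⟨t, ht1, ht2⟩ := hne
  have e1 := ht1.2 n le_rfl
  have e2 := ht2.2 n le_rfl
  have e3 := hbad n
  rw [show u n + s n + (t + -s n) = u n + t by ring] at e1
  rw [abs_le] at e1 e2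
  rw [lt_abs] at e3
  rcases e3 with e3 | e3 <;> linarith [e1.1, e1.2, e2.1, e2.2]

lemma aux_potter_add (f : ℝ → ℝ) (hf : Measurable f)
    (hs : ∀ t : ℝ, Tendsto (fun u => f (u + t) - f u) atTop (𝓝 0))
    (hb : ∀ T : ℝ, ∃ B : ℝ, ∀ u ∈ Icc (0:ℝ) T, |f u| ≤ B) (δ : ℝ) (hδ : 0 < δ) :
    ∃ c : ℝ, ∀ u v : ℝ, 0 ≤ u → u ≤ v → f u ≤ c + f v + δ * (v - u) := by
  obtain ⟨T₁, hT₁⟩ := aux_unif f hf hs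
  have h1 := ((hs 1).abs)
  rw [abs_zero] at h1
  obtain ⟨T₂, hT₂⟩ := eventually_atTop.1 (h1.eventually (eventually_le_nhds hδ))
  set T := max (max T₁ T₂) 0 with hT
  have hTT₁ : T₁ ≤ T := le_trans (le_max_left _ _) (le_max_left _ _)
  have hTT₂ : T₂ ≤ T := le_trans (le_max_right _ _) (le_max_left _ _)
  have hT0 : 0 ≤ T := le_max_right _ _
  have hstep : ∀ n : ℕ, ∀ u ≥ T, f u ≤ f (u + n) + δ * n := by
    intro n
    induction n with
    | zero => intro u _; simp
    | succ n ih =>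
      intro u hu
      have a := ih u hu
      have hn : (0:ℝ) ≤ n := Nat.cast_nonneg n
      have b := hT₂ (u + n) (by linarith)
      rw [abs_le] at b
      push_cast
      rw [← add_assoc]
      linarith [b.1]
  have hbig : ∀ u v, T ≤ u → u ≤ v → f u ≤ 2 + f v + δ * (v - u) := by
    intro u v hu huv
    have hf1 := Nat.floor_le (sub_nonneg.2 huv)
    have hf2 := Nat.lt_floor_add_one (v - u)
    set n := ⌊v - u⌋₊
    have a := hstep n u hu
    have hn : (0:ℝ) ≤ n := Nat.cast_nonneg n
    have b := hT₁ (u + n) (by linarith) (v - u - n) ⟨by linarith, by linarith⟩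
    rw [show u + n + (v - u - n) = v by ring, abs_le] at b
    have : δ * n ≤ δ * (v - u) := by gcongr
    linarith [b.1]
  obtain ⟨B, hB⟩ := hb T
  have hB0 : 0 ≤ B := (abs_nonneg _).trans (hB 0 ⟨le_rfl, hT0⟩)
  refine ⟨2 + 2 * B, fun u v hu huv => ?_⟩
  rcases le_total T u with h | h
  · linarith [hbig u v h huv]
  · have hu' := abs_le.1 (hB u ⟨hu, h⟩)
    rcases le_total T v with h2 | h2
    · have hT' := abs_le.1 (hB T ⟨hT0, le_rfl⟩)
      have := hbig T v le_rfl h2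
      have : δ * (v - T) ≤ δ * (v - u) := by gcongr
      linarith [hu'.2, hT'.1]
    · have hv' := abs_le.1 (hB v ⟨hu.trans huv, h2⟩)
      have : 0 ≤ δ * (v - u) := mul_nonneg hδ.le (by linarith)
      linarith [hu'.2, hv'.1]

lemma aux_potter (L : ℝ → ℝ) (hLpos : ∀ x > 0, 0 < L x) (hLmeas : Measurable L)
    (hLslow : SlowlyVaryingAtTop L) (hLbdd : BddAwayOnCompacts L) (δ : ℝ) (hδ : 0 < δ) :
    ∃ c : ℝ, 0 < c ∧ ∀ x y : ℝ, 1 ≤ x → x ≤ y → L x ≤ c * L y * (y / x) ^ δ := by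
  obtain ⟨c, hc⟩ := aux_potter_add (fun u => Real.log (L (Real.exp u)))
    (Real.measurable_log.comp (hLmeas.comp Real.measurable_exp)) (by
      intro t
      have h := (hLslow (Real.exp t) (Real.exp_pos t)).comp Real.tendsto_exp_atTop
      have h2 := h.log one_ne_zero
      rw [Real.log_one] at h2
      refine h2.congr fun u => ?_
      simp only [Function.comp]
      rw [Real.log_div (hLpos _ (by positivity)).ne' (hLpos _ (by positivity)).ne',
        Real.exp_add, mul_comm]) (by
      intro T
      obtain ⟨a, b, ha, hab⟩ := hLbdd (Real.exp '' Icc 0 T) (by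
        rintro _ ⟨x, -, rfl⟩
        exact Real.exp_pos x) (isCompact_Icc.image Real.continuous_exp)
      refine ⟨max |Real.log a| |Real.log b|, fun u hu => ?_⟩
      obtain ⟨h1, h2⟩ := hab _ (mem_image_of_mem _ hu)
      exact abs_le_max_abs_abs (Real.log_le_log ha h1)
        (Real.log_le_log (hLpos _ (Real.exp_pos u)) h2)) δ hδ
  refine ⟨Real.exp c, Real.exp_pos c, fun x y hx hxy => ?_⟩
  have hx0 : 0 < x := by linarith
  have hy0 : 0 < y := by linarith
  have h := hc (Real.log x) (Real.log y) (Real.log_nonneg hx) (Real.log_le_log hx0 hxy)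
  simp only [Real.exp_log hx0, Real.exp_log hy0] at h
  have h3 := Real.exp_le_exp.2 h
  rw [Real.exp_log (hLpos _ hx0), Real.exp_add, Real.exp_add, Real.exp_log (hLpos _ hy0)] at h3
  rwa [Real.rpow_def_of_pos (by positivity), Real.log_div hy0.ne' hx0.ne', mul_comm _ δ]

lemma aux_fub {Ω : Type*} [MeasurableSpace Ω] (P : Measure Ω) [IsProbabilityMeasure P]
    (μ : Measure ℝ) [IsFiniteMeasure μ] (F : ℝ × Ω → ℝ) (hF : Measurable F) (B : ℝ)
    (hB : ∀ p, |F p| ≤ B) :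
    ∫ ω, (∫ y, F (y, ω) ∂μ) ^ 2 ∂P = ∫ y, ∫ z, ∫ ω, F (y, ω) * F (z, ω) ∂P ∂μ ∂μ := by
  have hI : Measurable (fun ω => ∫ y, F (y, ω) ∂μ) :=
    (StronglyMeasurable.integral_prod_left' hF.stronglyMeasurable).measurable
  have hIb : ∀ ω, |∫ y, F (y, ω) ∂μ| ≤ B * μ.real univ := fun ω => by
    rw [← Real.norm_eq_abs]
    exact norm_integral_le_of_norm_le_const (ae_of_all _ fun y => hB (y, ω))
  have hmulb : ∀ p p', |F p * F p'| ≤ B * B := fun p p' => by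
    rw [abs_mul]
    exact mul_le_mul (hB p) (hB p') (abs_nonneg _) ((abs_nonneg _).trans (hB p))
  calc ∫ ω, (∫ y, F (y, ω) ∂μ) ^ 2 ∂P
      = ∫ ω, ∫ y, F (y, ω) * (∫ z, F (z, ω) ∂μ) ∂μ ∂P := by
        congr 1; ext ω
        rw [integral_mul_const, sq]
    _ = ∫ y, ∫ ω, F (y, ω) * (∫ z, F (z, ω) ∂μ) ∂P ∂μ := by
        refine integral_integral_swap ?_
        refine Integrable.of_bound (C := B * (B * μ.real univ)) ?_ (ae_of_all _ ?_)
        · refine Measurable.aestronglyMeasurable ?_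
          exact (hF.comp measurable_swap).mul (hI.comp measurable_fst)
        · rintro ⟨ω, y⟩
          simp only [Function.uncurry, Real.norm_eq_abs, abs_mul]
          exact mul_le_mul (hB _) (hIb _) (abs_nonneg _) ((abs_nonneg _).trans (hB (y, ω)))
    _ = ∫ y, ∫ z, ∫ ω, F (y, ω) * F (z, ω) ∂P ∂μ ∂μ := by
        congr 1; ext y
        simp_rw [← integral_const_mul]
        refine integral_integral_swap ?_
        refine Integrable.of_bound (C := B * B) ?_ (ae_of_all _ ?_)
        · refine Measurable.aestronglyMeasurable ?_
          exact (hF.comp (measurable_const.prodMk measurable_fst)).mul (hF.comp measurable_swap)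
        · rintro ⟨ω, z⟩
          exact hmulb _ _

lemma aux_kernel (r : ℝ) (hr : -1 < r) : ∃ k : ℝ → ℝ, Integrable k ∧ (∀ u, 0 ≤ k u) ∧
    ∀ u, u ≠ 0 → |u| ≤ 1 → |u| ^ r ≤ k u := by
  set k0 : ℝ → ℝ := indicator (Ioc 0 1) (fun u => u ^ r) with hk0
  have h0 : ∀ u, 0 ≤ k0 u := fun u => indicator_nonneg (fun v hv => Real.rpow_nonneg hv.1.le _) u
  have hi : Integrable k0 := by
    rw [hk0, integrable_indicator_iff measurableSet_Ioc]
    exact (intervalIntegrable_iff_integrableOn_Ioc_of_le zero_le_one).1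
      (intervalIntegral.intervalIntegrable_rpow' hr)
  refine ⟨fun u => k0 u + k0 (-u), hi.add hi.comp_neg, fun u => add_nonneg (h0 _) (h0 _), ?_⟩
  intro u hu hu1
  rcases lt_or_gt_of_ne hu with h | h
  · have : k0 (-u) = |u| ^ r := by
      rw [abs_of_neg h] at hu1 ⊢
      exact indicator_of_mem (s := Ioc (0:ℝ) 1) ⟨by linarith, hu1⟩ _
    show _ ≤ k0 u + k0 (-u)
    linarith [h0 u]
  · have : k0 u = |u| ^ r := by
      rw [abs_of_pos h] at hu1 ⊢
      exact indicator_of_mem (s := Ioc (0:ℝ) 1) ⟨by linarith, hu1⟩ _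
    show _ ≤ k0 u + k0 (-u)
    linarith [h0 (-u)]

/-- pointwise covariance bound -/
lemma aux_point (m : ℕ) (hm : 1 ≤ m) (H : ℝ) (hH : H ∈ Set.Ioo (1 / 2 : ℝ) 1)
    (L : ℝ → ℝ) (hLpos : ∀ x > 0, 0 < L x) (hLmeas : Measurable L)
    (hLslow : SlowlyVaryingAtTop L) (hLbdd : BddAwayOnCompacts L) (K C₁ : ℝ)
    (R : ℝ → ℝ → ℝ) (hR : ∀ s t, |R s t| ≤ K * K)
    (hcov : ∀ s t : ℝ, s ≠ t →
      |R s t| ≤ C₁ * L |t - s| ^ (2 * m) * |t - s| ^ (-(2 * (1 - H)))) :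
    ∃ D r : ℝ, 0 ≤ D ∧ -1 < r ∧ ∀ ε ∈ Ioo (0:ℝ) 1, ∀ y z : ℝ, y ≠ z → |y - z| ≤ 1 →
      |R (y / ε) (z / ε)| ≤ D * (ε ^ (2 * (1 - H)) * L (1 / ε) ^ (2 * m)) * |y - z| ^ r := by
  obtain ⟨hH1, hH2⟩ := hH
  have hm0 : (0:ℝ) < m := by exact_mod_cast hm
  set δ : ℝ := (2 * H - 1) / (4 * m) with hδ
  have hδ0 : 0 < δ := div_pos (by linarith) (by linarith)
  have hδm : δ * ((2 * m : ℕ) : ℝ) = (2 * H - 1) / 2 := by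
    rw [hδ]; push_cast; field_simp; ring
  obtain ⟨c, hc0, hc⟩ := aux_potter L hLpos hLmeas hLslow hLbdd δ hδ0
  set b : ℝ := 2 * (1 - H) with hb
  set e : ℝ := (2 * H - 1) / 2 with he
  have he0 : 0 < e := by rw [he]; linarith
  have hpow : ∀ x y : ℝ, 1 ≤ x → x ≤ y →
      L x ^ (2 * m) ≤ c ^ (2 * m) * L y ^ (2 * m) * (y / x) ^ e := by
    intro x y hx hxy
    have hx0 : 0 < x := by linarith
    have hy0 : 0 < y := by linarith
    have h := pow_le_pow_left₀ (hLpos x hx0).le (hc x y hx hxy) (2 * m)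
    rwa [mul_pow, mul_pow, ← Real.rpow_natCast ((y / x) ^ δ), ← Real.rpow_mul (by positivity),
      hδm] at h
  have hL1 : 0 < L 1 := hLpos 1 one_pos
  set D1 : ℝ := K * K * c ^ (2 * m) / L 1 ^ (2 * m) with hD1
  set D2 : ℝ := |C₁| * c ^ (2 * m) with hD2
  have hD1p : 0 ≤ D1 := div_nonneg (mul_nonneg (mul_self_nonneg K) (by positivity)) (by positivity)
  have hD2p : 0 ≤ D2 := by positivity
  refine ⟨D1 + D2, -(b + e), add_nonneg hD1p hD2p, by rw [hb, he]; linarith, ?_⟩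
  intro ε hε y z hyz hyz1
  obtain ⟨hε0, hε1⟩ := hε
  have hY : 1 ≤ 1 / ε := by rw [le_div_iff₀ hε0]; linarith
  have hLY : 0 < L (1 / ε) := hLpos _ (by positivity)
  have hd0 : 0 < |y - z| := abs_pos.2 (sub_ne_zero.2 hyz)
  set d := |y - z| with hd
  have hbase : 0 ≤ ε ^ b * L (1 / ε) ^ (2 * m) * d ^ (-(b + e)) := by positivity
  rcases le_total d ε with hdε | hdε
  · have h1 := hpow 1 (1 / ε) le_rfl hY
    have h2 : ε ^ (-(b + e)) ≤ d ^ (-(b + e)) :=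
      Real.rpow_le_rpow_of_nonpos hd0 hdε (by rw [hb]; linarith)
    have h3 : (1 / ε / 1 : ℝ) ^ e = ε ^ b * ε ^ (-(b + e)) := by
      rw [← Real.rpow_add hε0, div_one, one_div, Real.inv_rpow hε0.le, ← Real.rpow_neg hε0.le]
      congr 1; ring
    rw [h3] at h1
    have h4 : L 1 ^ (2 * m) ≤ c ^ (2 * m) * (ε ^ b * L (1 / ε) ^ (2 * m) * d ^ (-(b + e))) := by
      calc _ ≤ _ := h1
        _ = c ^ (2 * m) * (ε ^ b * L (1 / ε) ^ (2 * m) * ε ^ (-(b + e))) := by ring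
        _ ≤ _ := by gcongr
    have h5 : K * K ≤ D1 * (ε ^ b * L (1 / ε) ^ (2 * m) * d ^ (-(b + e))) := by
      rw [hD1, div_mul_eq_mul_div, le_div_iff₀ (by positivity), mul_assoc]
      rw [mul_assoc (K*K)]
      first
        | exact mul_le_mul_of_nonneg_left h4 (mul_self_nonneg K)
        | (have := mul_le_mul_of_nonneg_left h4 (mul_self_nonneg K); linarith)
    have h6 := mul_nonneg hD2p hbase
    have h7 := hR (y / ε) (z / ε)
    nlinarith
  · have hne : y / ε ≠ z / ε := fun h => hyz (by field_simp at h; exact h)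
    have h1 := hcov _ _ hne
    have h2 : |z / ε - y / ε| = d / ε := by
      rw [← sub_div, abs_div, abs_of_pos hε0, abs_sub_comm]
    rw [h2] at h1
    have h3 := hpow (d / ε) (1 / ε) (by rw [le_div_iff₀ hε0]; linarith) (by gcongr)
    have h4 : (1 / ε / (d / ε) : ℝ) = d⁻¹ := by field_simp
    rw [h4, Real.inv_rpow hd0.le, ← Real.rpow_neg hd0.le] at h3
    have h5 : (d / ε) ^ (-b) = d ^ (-b) * ε ^ b := by
      rw [Real.div_rpow hd0.le hε0.le, Real.rpow_neg hε0.le, div_inv_eq_mul]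
    rw [h5] at h1
    have hLd : 0 < L (d / ε) := hLpos _ (by positivity)
    have h6 : |R (y / ε) (z / ε)| ≤ D2 * (ε ^ b * L (1 / ε) ^ (2 * m) * d ^ (-(b + e))) := by
      calc _ ≤ _ := h1
        _ ≤ |C₁| * (c ^ (2 * m) * L (1 / ε) ^ (2 * m) * d ^ (-e)) * (d ^ (-b) * ε ^ b) := by
          gcongr
          exact le_abs_self _
        _ = _ := by
          rw [neg_add, Real.rpow_add hd0, hD2]; ring
    have h7 := mul_nonneg hD1p hbase
    nlinarith

/-- For a uniformly bounded process `q` whose covariance satisfies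
`|E[q(s)q(t)]| ≤ C₁ L(|t-s|)^{2m} |t-s|^{-2(1-H)}`, one has, uniformly in `x ∈ [0,1]` and
`ε ∈ (0,ζ)`: `E[(∫_0^x q(y/ε) G(y) dy)²] ≤ C ε^{2(1-H)} L(1/ε)^{2m}`. -/
theorem second_moment_oscillatory_bound
    {Ω : Type*} [MeasurableSpace Ω] (P : Measure Ω) [IsProbabilityMeasure P]
    (m : ℕ) (hm : 1 ≤ m) (H : ℝ) (hH : H ∈ Set.Ioo (1 / 2 : ℝ) 1)
    (L : ℝ → ℝ) (hLpos : ∀ x > 0, 0 < L x) (hLmeas : Measurable L)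
    (hLslow : SlowlyVaryingAtTop L) (hLbdd : BddAwayOnCompacts L)
    (q : ℝ × Ω → ℝ) (hqmeas : Measurable q) (K : ℝ) (hqbdd : ∀ p, |q p| ≤ K)
    (C₁ : ℝ)
    (hcov : ∀ s t : ℝ, s ≠ t →
      |∫ ω, q (s, ω) * q (t, ω) ∂P| ≤ C₁ * L |t - s| ^ (2 * m) * |t - s| ^ (-(2 * (1 - H))))
    (G : ℝ → ℝ) (hG : ContinuousOn G (Set.Icc 0 1)) (ζ : ℝ) (hζ : ζ ∈ Set.Ioo (0 : ℝ) 1) :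
    ∃ C : ℝ, ∀ ε ∈ Set.Ioo (0 : ℝ) ζ, ∀ x ∈ Set.Icc (0 : ℝ) 1,
      (∫ ω, (∫ y in (0 : ℝ)..x, q (y / ε, ω) * G y) ^ 2 ∂P) ≤
        C * ε ^ (2 * (1 - H)) * L (1 / ε) ^ (2 * m) := by
  obtain ⟨D, r, hD, hr, hpt⟩ := aux_point m hm H hH L hLpos hLmeas hLslow hLbdd K C₁
    (fun s t => ∫ ω, q (s, ω) * q (t, ω) ∂P) (by
      intro s t
      have h := norm_integral_le_of_norm_le_const (μ := P) (f := fun ω => q (s, ω) * q (t, ω))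
        (C := K * K) (ae_of_all _ fun ω => by
          rw [Real.norm_eq_abs, abs_mul]
          exact mul_le_mul (hqbdd _) (hqbdd _) (abs_nonneg _) ((abs_nonneg _).trans (hqbdd (s, ω))))
      simpa using h) hcov
  obtain ⟨k, hki, hk0, hk⟩ := aux_kernel r hr
  set g : ℝ → ℝ := IccExtend (zero_le_one (α := ℝ)) ((Icc (0:ℝ) 1).restrict G) with hg
  have hgc : Continuous g := (continuousOn_iff_continuous_restrict.1 hG).Icc_extend'
  have hgG : ∀ y ∈ Icc (0:ℝ) 1, g y = G y := fun y hy => by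
    rw [hg, IccExtend_of_mem _ _ hy]; rfl
  obtain ⟨M, hM⟩ := isCompact_Icc.exists_bound_of_continuousOn hG
  have hgM : ∀ y, |g y| ≤ M := fun y => hM _ (projIcc (0:ℝ) 1 zero_le_one y).2
  have hM0 : 0 ≤ M := (abs_nonneg _).trans (hgM 0)
  have hK0 : 0 ≤ K := by
    obtain ⟨ω⟩ : Nonempty Ω := nonempty_of_isProbabilityMeasure P
    exact (abs_nonneg _).trans (hqbdd (0, ω))
  refine ⟨M * M * D * ∫ u, k u, fun ε hε x hx => ?_⟩
  have hε' : ε ∈ Ioo (0:ℝ) 1 := ⟨hε.1, hε.2.trans hζ.2⟩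
  set W : ℝ := ε ^ (2 * (1 - H)) * L (1 / ε) ^ (2 * m) with hW
  have hW0 : 0 ≤ W := mul_nonneg (Real.rpow_nonneg hε.1.le _)
    (pow_nonneg (hLpos _ (one_div_pos.2 hε.1)).le _)
  have hk_int : 0 ≤ ∫ u, k u := integral_nonneg hk0
  have hIoc : ∀ y ∈ Ioc 0 x, y ∈ Icc (0:ℝ) 1 := fun y hy => ⟨hy.1.le, hy.2.trans hx.2⟩
  have e1 : ∀ ω, ∫ y in (0:ℝ)..x, q (y / ε, ω) * G y
      = ∫ y in Ioc 0 x, q (y / ε, ω) * g y := fun ω => by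
    rw [intervalIntegral.integral_of_le hx.1]
    exact setIntegral_congr_fun measurableSet_Ioc fun y hy => by
      show _ * G y = _ * g y
      rw [hgG y (hIoc y hy)]
  simp_rw [e1]
  have hfub := aux_fub P (volume.restrict (Ioc 0 x)) (fun p => q (p.1 / ε, p.2) * g p.1)
    ((hqmeas.comp ((measurable_fst.div_const ε).prodMk measurable_snd)).mul
      (hgc.measurable.comp measurable_fst)) (K * M) (fun p => by
        rw [abs_mul]
        exact mul_le_mul (hqbdd _) (hgM _) (abs_nonneg _) hK0)
  simp only at hfub
  rw [hfub]
  have hin : ∀ y ∈ Ioc 0 x,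
      ‖∫ z in Ioc 0 x, ∫ ω, q (y / ε, ω) * g y * (q (z / ε, ω) * g z) ∂P‖
        ≤ M * M * D * W * ∫ u, k u := by
    intro y hy
    have hki' : Integrable (fun z => M * M * D * W * k (y - z)) :=
      (hki.comp_sub_left y).const_mul _
    calc _ ≤ ∫ z in Ioc 0 x, M * M * D * W * k (y - z) := by
          refine norm_integral_le_of_norm_le hki'.integrableOn ?_
          have hne : ∀ᵐ z ∂(volume.restrict (Ioc 0 x)), z ≠ y :=
            ae_restrict_of_ae (compl_mem_ae_iff.2 (measure_singleton y))
          filter_upwards [hne, ae_restrict_mem measurableSet_Ioc] with z hz hzI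
          have hyz1 : |y - z| ≤ 1 := by
            rw [abs_le]
            have h1 := hIoc y hy
            have h2 := hIoc z hzI
            constructor <;> linarith [h1.1, h1.2, h2.1, h2.2]
          have h1 := hpt ε hε' y z (Ne.symm hz) hyz1
          have h2 := hk (y - z) (sub_ne_zero.2 (Ne.symm hz)) hyz1
          have h3 : ∫ ω, q (y / ε, ω) * g y * (q (z / ε, ω) * g z) ∂P
              = (g y * g z) * ∫ ω, q (y / ε, ω) * q (z / ε, ω) ∂P := by
            rw [← integral_const_mul]
            congr 1; ext ω; ring
          rw [h3, Real.norm_eq_abs, abs_mul, abs_mul]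
          calc _ ≤ (M * M) * (D * W * k (y - z)) := by
                refine mul_le_mul (mul_le_mul (hgM y) (hgM z) (abs_nonneg _) hM0)
                  (h1.trans ?_) (abs_nonneg _) (mul_nonneg hM0 hM0)
                exact mul_le_mul_of_nonneg_left h2 (mul_nonneg hD hW0)
            _ = _ := by ring
      _ ≤ ∫ z, M * M * D * W * k (y - z) := by
          refine setIntegral_le_integral hki' (ae_of_all _ fun z => ?_)
          exact mul_nonneg (by positivity) (hk0 _)
      _ = _ := by
          rw [integral_const_mul, integral_sub_left_eq_self k volume y]
  have hfin := norm_setIntegral_le_of_norm_le_const (μ := volume) (s := Ioc 0 x)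
    measure_Ioc_lt_top hin
  have hvol : volume.real (Ioc 0 x) ≤ 1 := by
    rw [Real.volume_real_Ioc_of_le hx.1]; linarith [hx.2]
  calc _ ≤ _ := le_abs_self _
    _ ≤ _ := hfin
    _ ≤ M * M * D * W * (∫ u, k u) * 1 := by
      refine mul_le_mul_of_nonneg_left hvol ?_
      positivity
    _ = _ := by rw [hW]; ring

end
end
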